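/- arXiv:math/0302115 — 3 statements merged into one kernel-verified Lean document; each statement's English description precedes it below -/
import Mathlib

section
/- For every real ρ with −2 < ρ ≤ −2/3 and every real β > 0, setting η := (ρ+2)(3ρ+10)/32, ρ* := −4/3 − ρ, and d := 1 + (3/4)(ρ+2), one has σ̄(8/3, ρ*, β) + (2 − d) = (1/4)·( √(24β + (3 − √(1+24η))²) + (3 − √(1+24η)) ). This identifies the hiding exponent σ(η hides β) in the regime η ≤ 1/3. -/
/-- `σ̄(κ,ρ,α) = √(4α/κ + ((ρ+2)/κ − 1/2)²) − ((ρ+2)/κ − 1/2)` -/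
noncomputable def sigmaBar (κ ρ α : ℝ) : ℝ :=
  Real.sqrt (4 * α / κ + ((ρ + 2) / κ - 1 / 2) ^ 2) - ((ρ + 2) / κ - 1 / 2)

/-!
The substitution `ρ ↦ κ - 4 - ρ` only changes the sign of the drift term `(ρ + 2) / κ - 1 / 2` of
`sigmaBar`, and twice that term is exactly `-(2 - d)` for `d = 1 + 2 (ρ + 2) / κ`: adding
`2 - d` undoes the reflection. On the other hand `1 + 16κη̄ / (4 - κ)²` is a perfect square in `ρ`,
so on the branch `κ / 2 - 4 ≤ ρ` the drift is an affine function of its square root, and `sigmaBar`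
becomes a function of `η̄`.
-/

/-- The boundary scaling exponent `η̄(κ,ρ)` of SLE(κ,ρ) at its starting point. -/
noncomputable def etaBar (κ ρ : ℝ) : ℝ :=
  (ρ + 2) * (ρ + 6 - κ) / (4 * κ)

/-- The exponent `σ̄` in terms of the boundary exponent `η = η̄(κ,ρ)` instead of the weight `ρ`; for
`κ = 8 / 3` it is the hiding exponent `σ(η hides α)`. Everything is scaled by `4 - κ`, which gives
the constants `24`, `3` and `1 / 4` at `κ = 8 / 3` and excludes `κ = 4`. -/
noncomputable def sigmaOfEta (κ η α : ℝ) : ℝ :=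
  (4 - κ) / (2 * κ) *
    (√(16 * κ / (4 - κ) ^ 2 * α + (4 / (4 - κ) - √(1 + 16 * κ / (4 - κ) ^ 2 * η)) ^ 2)
      + (4 / (4 - κ) - √(1 + 16 * κ / (4 - κ) ^ 2 * η)))

theorem sigmaBar_reflect_add {κ : ℝ} (hκ : κ ≠ 0) (ρ α : ℝ) :
    sigmaBar κ (κ - 4 - ρ) α + (2 - (1 + 2 / κ * (ρ + 2))) = sigmaBar κ ρ α := by
  have drift_reflect : (κ - 4 - ρ + 2) / κ - 1 / 2 = -((ρ + 2) / κ - 1 / 2) := by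
    field_simp
    ring
  rw [sigmaBar, drift_reflect, neg_sq, sigmaBar]
  ring

theorem sqrt_one_add_etaBar {κ ρ : ℝ} (hκ₀ : κ ≠ 0) (hκ₄ : κ < 4) (hρ : κ / 2 - 4 ≤ ρ) :
    √(1 + 16 * κ / (4 - κ) ^ 2 * etaBar κ ρ) = 1 + 2 * (ρ + 2) / (4 - κ) := by
  have hpos : 0 < 4 - κ := sub_pos.2 hκ₄
  have radicand_eq_sq :
      1 + 16 * κ / (4 - κ) ^ 2 * etaBar κ ρ = (1 + 2 * (ρ + 2) / (4 - κ)) ^ 2 := by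
    rw [etaBar]
    field_simp
    ring
  have root_nonneg : 0 ≤ 1 + 2 * (ρ + 2) / (4 - κ) := by
    rw [one_add_div hpos.ne']
    exact div_nonneg (by linarith) hpos.le
  rw [radicand_eq_sq, Real.sqrt_sq root_nonneg]

theorem sigmaOfEta_etaBar {κ ρ : ℝ} (hκ₀ : 0 < κ) (hκ₄ : κ < 4) (hρ : κ / 2 - 4 ≤ ρ) (α : ℝ) :
    sigmaOfEta κ (etaBar κ ρ) α = sigmaBar κ ρ α := by
  have hpos : 0 < 4 - κ := sub_pos.2 hκ₄
  rw [sigmaOfEta, sqrt_one_add_etaBar hκ₀.ne' hκ₄ hρ, sigmaBar]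
  set c := (4 - κ) / (2 * κ) with hc
  set v := 4 / (4 - κ) - (1 + 2 * (ρ + 2) / (4 - κ)) with hv
  have drift_eq : (ρ + 2) / κ - 1 / 2 = -(c * v) := by
    rw [hc, hv]
    field_simp
    ring
  have radicand_eq :
      4 * α / κ + (-(c * v)) ^ 2 = c ^ 2 * (16 * κ / (4 - κ) ^ 2 * α + v ^ 2) := by
    rw [hc]
    field_simp
    ring
  rw [drift_eq, radicand_eq, Real.sqrt_mul (sq_nonneg c), Real.sqrt_sq (by positivity)]
  ring

theorem stmt_5_general {κ ρ : ℝ} (hκ₀ : 0 < κ) (hκ₄ : κ < 4) (hρ : κ / 2 - 4 ≤ ρ) (β : ℝ) :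
    sigmaBar κ (κ - 4 - ρ) β + (2 - (1 + 2 / κ * (ρ + 2))) = sigmaOfEta κ (etaBar κ ρ) β := by
  rw [sigmaBar_reflect_add hκ₀.ne', sigmaOfEta_etaBar hκ₀ hκ₄ hρ]

theorem stmt_5 (ρ β : ℝ) (h1 : -2 < ρ) (h2 : ρ ≤ -2 / 3) (hβ : 0 < β) :
    sigmaBar (8 / 3) (-4 / 3 - ρ) β + (2 - (1 + (3 / 4) * (ρ + 2))) =
      (1 / 4) * (Real.sqrt (24 * β +
          (3 - Real.sqrt (1 + 24 * ((ρ + 2) * (3 * ρ + 10) / 32))) ^ 2)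
        + (3 - Real.sqrt (1 + 24 * ((ρ + 2) * (3 * ρ + 10) / 32)))) := by
  convert stmt_5_general (κ := 8 / 3) (ρ := ρ) (by norm_num) (by norm_num) (by linarith) β using 2
    <;> norm_num [sigmaOfEta, etaBar]
  ring_nf
end

section
/- For every real η > 5/8 and every real β ≥ 5/8, set E := √(1+24η), α := ((E−3)² − 1)/24 (so that ξ̃(5/8, α) = η), and σ := (1/4)·( √(24β + (√(1+24α) − 3)²) − (√(1+24α) − 3) ). Then ξ̃(5/8, σ + β + α) − η − β = ( √(24β + (E−6)²) − (E−6) )/2. This is the closed form of the two-sided hiding exponent τ(η hides β). -/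
/-- `ξ̃(u,α) = ((√(24u+1) + √(24α+1) − 1)² − 1)/24` -/
noncomputable def xiTilde (u α : ℝ) : ℝ :=
  ((Real.sqrt (24 * u + 1) + Real.sqrt (24 * α + 1) - 1) ^ 2 - 1) / 24

/-!
The root `r x = √(24x + 1)` linearizes `ξ̃`: `r (ξ̃(u, α)) = r u + r α - 1`, so `ξ̃(u, ·)`
translates roots by `r u - 1`. The one-sided exponent is exactly what makes
`(r (σ + β + α) - 3)² = 24β + (r α - 3)²`. Translating all roots by `r (5/8) - 1 = 3` turns this
into `(r (τ + β + η) - 6)² = 24β + (r η - 6)²`, the same relation with offset `6` in place of `3`.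
-/

/-- The root `√(24x + 1)` of the KPZ relation, in terms of which `xiTilde` is additive
up to the constant `1`. -/
noncomputable def kpzRoot (x : ℝ) : ℝ := Real.sqrt (24 * x + 1)

/-- The exponent of `α` hiding `β` with offset `c`: the one-sided hiding exponent for `c = 3`, and
the closed form of the two-sided one for `c = 6`. The factor `c / 12` makes `24β` the increment of
`(kpzRoot · - c) ^ 2` from `α` to `hidingExponent c α β + β + α`. -/
noncomputable def hidingExponent (c α β : ℝ) : ℝ :=
  c / 12 * (Real.sqrt (24 * β + (kpzRoot α - c) ^ 2) - (kpzRoot α - c))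

section

variable {u c α β η : ℝ}

lemma sqrt_one_add_eq_kpzRoot (x : ℝ) : Real.sqrt (1 + 24 * x) = kpzRoot x := by
  rw [kpzRoot, add_comm]

lemma sq_kpzRoot (hα : -1 / 24 ≤ α) : kpzRoot α ^ 2 = 24 * α + 1 :=
  Real.sq_sqrt (by linarith)

lemma kpzRoot_eq_of_sq {r : ℝ} (hr : 0 ≤ r) (h : 24 * α + 1 = r ^ 2) : kpzRoot α = r := by
  rw [kpzRoot, h, Real.sqrt_sq hr]

lemma one_le_kpzRoot (hu : 0 ≤ u) : 1 ≤ kpzRoot u :=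
  Real.one_le_sqrt.mpr (by linarith)

lemma kpzRoot_five_eighths : kpzRoot (5 / 8) = 4 :=
  kpzRoot_eq_of_sq (by norm_num) (by norm_num)

lemma xiTilde_eq_kpzRoot (u α : ℝ) :
    xiTilde u α = ((kpzRoot u + kpzRoot α - 1) ^ 2 - 1) / 24 := rfl

lemma kpzRoot_xiTilde (hu : 0 ≤ u) (α : ℝ) :
    kpzRoot (xiTilde u α) = kpzRoot u + kpzRoot α - 1 := by
  have hα : 0 ≤ kpzRoot α := Real.sqrt_nonneg _
  refine kpzRoot_eq_of_sq (by linarith [one_le_kpzRoot hu]) ?_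
  rw [xiTilde_eq_kpzRoot]
  ring

lemma neg_one_div_le_xiTilde (u α : ℝ) : -1 / 24 ≤ xiTilde u α := by
  rw [xiTilde_eq_kpzRoot]
  linarith [sq_nonneg (kpzRoot u + kpzRoot α - 1)]

lemma hidingExponent_add_add (hα : -1 / 24 ≤ α) (hβ : 0 ≤ 24 * β + (kpzRoot α - c) ^ 2) :
    hidingExponent c α β + β + α
      = ((Real.sqrt (24 * β + (kpzRoot α - c) ^ 2) + c) ^ 2 - 1) / 24 := by
  rw [hidingExponent]
  linear_combination -Real.sq_sqrt hβ / 24 - sq_kpzRoot hα / 24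

lemma kpzRoot_hidingExponent_add_add (hc : 0 ≤ c) (hα : -1 / 24 ≤ α)
    (hβ : 0 ≤ 24 * β + (kpzRoot α - c) ^ 2) :
    kpzRoot (hidingExponent c α β + β + α)
      = Real.sqrt (24 * β + (kpzRoot α - c) ^ 2) + c := by
  refine kpzRoot_eq_of_sq (by positivity) ?_
  rw [hidingExponent_add_add hα hβ]
  ring

lemma xiTilde_sq_sub_one_div (hη : -1 / 24 ≤ η) (huη : kpzRoot u - 1 ≤ kpzRoot η) :
    xiTilde u (((kpzRoot η - (kpzRoot u - 1)) ^ 2 - 1) / 24) = η := by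
  have hroot : kpzRoot (((kpzRoot η - (kpzRoot u - 1)) ^ 2 - 1) / 24)
      = kpzRoot η - (kpzRoot u - 1) :=
    kpzRoot_eq_of_sq (by linarith) (by ring)
  rw [xiTilde_eq_kpzRoot, hroot]
  linear_combination sq_kpzRoot hη / 24

lemma xiTilde_five_eighths_sq_sub_one_div (hη : 1 / 3 ≤ η) :
    xiTilde (5 / 8) (((kpzRoot η - 3) ^ 2 - 1) / 24) = η := by
  have hroot : kpzRoot (5 / 8) - 1 = 3 := by rw [kpzRoot_five_eighths]; norm_num
  have hthree : 3 ≤ kpzRoot η := Real.le_sqrt_of_sq_le (by linarith)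
  simpa only [hroot] using
    xiTilde_sq_sub_one_div (u := 5 / 8) (η := η) (by linarith) (by linarith)

lemma hidingExponent_three (α β : ℝ) :
    hidingExponent 3 α β
      = 1 / 4 * (Real.sqrt (24 * β + (kpzRoot α - 3) ^ 2) - (kpzRoot α - 3)) := by
  rw [hidingExponent]
  ring

lemma hidingExponent_six (η β : ℝ) :
    hidingExponent 6 η β = (Real.sqrt (24 * β + (kpzRoot η - 6) ^ 2) - (kpzRoot η - 6)) / 2 := by
  rw [hidingExponent]
  ring

theorem stmt_13_general (hu : 0 ≤ u) (hc : 0 ≤ c) (hα : -1 / 24 ≤ α)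
    (hβ : 0 ≤ 24 * β + (kpzRoot α - c) ^ 2) (hη : xiTilde u α = η) :
    xiTilde u (hidingExponent c α β + β + α) - η - β
      = hidingExponent (c + kpzRoot u - 1) η β := by
  subst hη
  have hroot : kpzRoot (xiTilde u α) - (c + kpzRoot u - 1) = kpzRoot α - c := by
    rw [kpzRoot_xiTilde hu]
    ring
  have hsum := hidingExponent_add_add (c := c + kpzRoot u - 1) (neg_one_div_le_xiTilde u α)
    (hroot.symm ▸ hβ)
  rw [hroot] at hsum
  rw [xiTilde_eq_kpzRoot u (_ + _), kpzRoot_hidingExponent_add_add hc hα hβ]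
  linear_combination -hsum

end

theorem stmt_13 (η β : ℝ) (hη : 5 / 8 < η) (hβ : 5 / 8 ≤ β) :
    xiTilde (5 / 8)
        ((1 / 4) * (Real.sqrt (24 * β +
            (Real.sqrt (1 + 24 * (((Real.sqrt (1 + 24 * η) - 3) ^ 2 - 1) / 24)) - 3) ^ 2)
          - (Real.sqrt (1 + 24 * (((Real.sqrt (1 + 24 * η) - 3) ^ 2 - 1) / 24)) - 3))
          + β + ((Real.sqrt (1 + 24 * η) - 3) ^ 2 - 1) / 24)
      - η - β
    = (Real.sqrt (24 * β + (Real.sqrt (1 + 24 * η) - 6) ^ 2)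
        - (Real.sqrt (1 + 24 * η) - 6)) / 2 := by
  have h := stmt_13_general (c := 3) (β := β) (by norm_num) (by norm_num)
    (by linarith [sq_nonneg (kpzRoot η - 3)]) (by positivity)
    (xiTilde_five_eighths_sq_sub_one_div (η := η) (by linarith))
  rw [kpzRoot_five_eighths, show (3 : ℝ) + 4 - 1 = 6 by norm_num] at h
  simpa only [sqrt_one_add_eq_kpzRoot, hidingExponent_three, hidingExponent_six] using h
end

section
/- For every real η > 5/8 and every real β > 5/8, set E := √(1+24η), B := √(1+24β), α := ((E−3)² − 1)/24 (so that ξ̃(5/8, α) = η), and σ' := (1/4)·( √(24α + (B−3)²) − (B−3) ). Then ξ̃(5/8, σ' + α + β) − η − β = ( 9 − B − E + 2·√((B−3)² + (E−3)² − 1) )/4. In particular, for η = β = 1 this mixed two-sided hiding exponent τ̂(1,1) equals (2√7 − 1)/4. -/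
/-!
In the coordinate `r = √(24x + 1)`, so `x = (r² − 1)/24`, the map `ξ̃(5/8, ·)` is the translation
`r ↦ r + 3`. With `e = E − 3`, `b = B − 3` and `s = √(b² + e² − 1)`, the one-sided hiding exponent
is exactly what makes `σ' + α + β` the exponent with coordinate `s + 3`. Hence
`ξ̃(5/8, σ' + α + β)` has coordinate `s + 6`, while `η` and `β` have coordinates `e + 3` and
`b + 3`; in the difference of the three squares everything quadratic in `b`, `e`, `s` cancels.
-/

/-- The exponent `x` with `√(24x + 1) = |r|`. In the coordinate `r ≥ 0`, `xiTilde` becomes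
addition up to a shift by `1`; negative `r` are allowed because `√(1 + 24β) - 3` may have either
sign. -/
noncomputable def exponentOfRoot (r : ℝ) : ℝ :=
  (r ^ 2 - 1) / 24

theorem exponentOfRoot_sqrt {x : ℝ} (hx : 0 ≤ 1 + 24 * x) :
    exponentOfRoot (√(1 + 24 * x)) = x := by
  rw [exponentOfRoot, Real.sq_sqrt hx]
  ring

theorem sqrt_exponentOfRoot {r : ℝ} (hr : 0 ≤ r) : √(24 * exponentOfRoot r + 1) = r := by
  rw [show 24 * exponentOfRoot r + 1 = r ^ 2 by rw [exponentOfRoot]; ring, Real.sqrt_sq hr]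

theorem xiTilde_exponentOfRoot {p q : ℝ} (hp : 0 ≤ p) (hq : 0 ≤ q) :
    xiTilde (exponentOfRoot p) (exponentOfRoot q) = exponentOfRoot (p + q - 1) := by
  rw [xiTilde, sqrt_exponentOfRoot hp, sqrt_exponentOfRoot hq, exponentOfRoot]

/-- The one-sided hiding exponent `σ(β hides α)` for `α = exponentOfRoot e` and
`β = exponentOfRoot (b + c)`, so that the radicand is `24α + b²`. The exponent `5/8` corresponds to
the shift `c = √(24 · 5/8 + 1) - 1 = 3`, for which the factor `c / 12` is the usual `1/4`; any other
`c` replaces `5/8` by the exponent `exponentOfRoot (c + 1)`. -/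
noncomputable def oneSidedHidingExponent (c b e : ℝ) : ℝ :=
  c / 12 * (√(b ^ 2 + e ^ 2 - 1) - b)

theorem oneSidedHidingExponent_add_add {b e : ℝ} (h : 1 ≤ b ^ 2 + e ^ 2) (c : ℝ) :
    oneSidedHidingExponent c b e + exponentOfRoot e + exponentOfRoot (b + c) =
      exponentOfRoot (√(b ^ 2 + e ^ 2 - 1) + c) := by
  have hs : √(b ^ 2 + e ^ 2 - 1) ^ 2 = b ^ 2 + e ^ 2 - 1 := Real.sq_sqrt (sub_nonneg.2 h)
  simp only [oneSidedHidingExponent, exponentOfRoot]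
  linear_combination -hs / 24

theorem mixedHidingExponent_eq {b c e : ℝ} (hc : 0 ≤ c) (h : 1 ≤ b ^ 2 + e ^ 2) :
    xiTilde (exponentOfRoot (c + 1))
        (oneSidedHidingExponent c b e + exponentOfRoot e + exponentOfRoot (b + c))
        - exponentOfRoot (e + c) - exponentOfRoot (b + c) =
      c / 12 * (c - b - e + 2 * √(b ^ 2 + e ^ 2 - 1)) := by
  have hs : √(b ^ 2 + e ^ 2 - 1) ^ 2 = b ^ 2 + e ^ 2 - 1 := Real.sq_sqrt (sub_nonneg.2 h)
  rw [oneSidedHidingExponent_add_add h, xiTilde_exponentOfRoot (by positivity) (by positivity)]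
  simp only [exponentOfRoot]
  linear_combination hs / 24

theorem stmt_17_general {η β : ℝ} (hη : 0 ≤ 1 + 24 * η) (hβ : 0 ≤ 1 + 24 * β)
    (h : 1 ≤ (√(1 + 24 * β) - 3) ^ 2 + (√(1 + 24 * η) - 3) ^ 2) :
    xiTilde (5 / 8)
        ((1 / 4) * (√(24 * (((√(1 + 24 * η) - 3) ^ 2 - 1) / 24) + (√(1 + 24 * β) - 3) ^ 2)
            - (√(1 + 24 * β) - 3))
          + ((√(1 + 24 * η) - 3) ^ 2 - 1) / 24 + β)
        - η - β
      = (9 - √(1 + 24 * β) - √(1 + 24 * η)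
          + 2 * √((√(1 + 24 * β) - 3) ^ 2 + (√(1 + 24 * η) - 3) ^ 2 - 1)) / 4 := by
  have key := mixedHidingExponent_eq (c := 3) (by norm_num) h
  have exponentOfRoot_four : exponentOfRoot (3 + 1) = 5 / 8 := by norm_num [exponentOfRoot]
  have radicand : 24 * (((√(1 + 24 * η) - 3) ^ 2 - 1) / 24) + (√(1 + 24 * β) - 3) ^ 2 =
      (√(1 + 24 * β) - 3) ^ 2 + (√(1 + 24 * η) - 3) ^ 2 - 1 := by ring
  rw [sub_add_cancel, sub_add_cancel, exponentOfRoot_sqrt hη, exponentOfRoot_sqrt hβ,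
    exponentOfRoot_four, oneSidedHidingExponent, exponentOfRoot] at key
  rw [radicand, show (1 / 4 : ℝ) = 3 / 12 by norm_num, key]
  ring

theorem mixedHidingFormula_one_one :
    (9 - √(1 + 24 * (1 : ℝ)) - √(1 + 24 * (1 : ℝ))
        + 2 * √((√(1 + 24 * (1 : ℝ)) - 3) ^ 2 + (√(1 + 24 * (1 : ℝ)) - 3) ^ 2 - 1)) / 4
      = (2 * √7 - 1) / 4 := by
  have sqrt_twentyFive : √(1 + 24 * (1 : ℝ)) = 5 := by
    rw [Real.sqrt_eq_iff_mul_self_eq] <;> norm_num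
  rw [sqrt_twentyFive]
  norm_num
  ring

theorem stmt_17 (η β : ℝ) (hη : 5 / 8 < η) (hβ : 5 / 8 < β) :
    (xiTilde (5 / 8)
        ((1 / 4) * (Real.sqrt (24 * (((Real.sqrt (1 + 24 * η) - 3) ^ 2 - 1) / 24)
              + (Real.sqrt (1 + 24 * β) - 3) ^ 2)
            - (Real.sqrt (1 + 24 * β) - 3))
          + ((Real.sqrt (1 + 24 * η) - 3) ^ 2 - 1) / 24 + β)
        - η - β
      = (9 - Real.sqrt (1 + 24 * β) - Real.sqrt (1 + 24 * η)
          + 2 * Real.sqrt ((Real.sqrt (1 + 24 * β) - 3) ^ 2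
              + (Real.sqrt (1 + 24 * η) - 3) ^ 2 - 1)) / 4) ∧
    (9 - Real.sqrt (1 + 24 * (1 : ℝ)) - Real.sqrt (1 + 24 * (1 : ℝ))
        + 2 * Real.sqrt ((Real.sqrt (1 + 24 * (1 : ℝ)) - 3) ^ 2
            + (Real.sqrt (1 + 24 * (1 : ℝ)) - 3) ^ 2 - 1)) / 4
      = (2 * Real.sqrt 7 - 1) / 4 := by
  have four_le_root : 4 ≤ √(1 + 24 * η) := Real.le_sqrt_of_sq_le (by linarith)
  have one_le_sq_add_sq : 1 ≤ (√(1 + 24 * β) - 3) ^ 2 + (√(1 + 24 * η) - 3) ^ 2 :=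
    le_add_of_nonneg_of_le (sq_nonneg _) (one_le_pow₀ (by linarith))
  exact ⟨stmt_17_general (by linarith) (by linarith) one_le_sq_add_sq, mixedHidingFormula_one_one⟩
end
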